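/- Let n, N be natural numbers, and for each e ∈ Fin n let d_e and m_e be natural numbers, A^e a d_e × d_e complex matrix that is invertible, C^e a d_e × m_e complex matrix, B^e an m_e × d_e complex matrix, L^e an m_e × m_e complex matrix, and R_e an m_e × N complex matrix. Suppose the condensed matrix K := Σ_e R_eᵀ (L^e − B^e (A^e)⁻¹ C^e) R_e is invertible. Then for every family of vectors (F^e ∈ ℂ^{d_e})_{e ∈ Fin n} there exists a unique pair of a family (U^e ∈ ℂ^{d_e})_{e ∈ Fin n} and a vector Λ ∈ ℂ^N satisfying A^e U^e + C^e (R_e Λ) = F^e for every e and Σ_e R_eᵀ (B^e U^e + L^e (R_e Λ)) = 0, and it is given by Λ = K⁻¹ S with S := −Σ_e R_eᵀ B^e (A^e)⁻¹ F^e and U^e = (A^e)⁻¹ (F^e − C^e (R_e Λ)). -/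

import Mathlib

open Matrix

/-!
Invertibility of `A e` lets each cell equation be solved for `U e` in terms of `Λ`. Substituting
into the transmission condition leaves the residual `K Λ - S`, to which cell `e` contributes the
Schur complement of its local block system. Hence the whole system is equivalent to the condensed
equation `K Λ = S`, which determines `Λ`, together with cellwise recovery of `U`.
-/

theorem mulVec_eq_iff_eq_inv_mulVec {𝕜 ν : Type*} [CommRing 𝕜] [Fintype ν] [DecidableEq ν]
    {M : Matrix ν ν 𝕜} (hM : IsUnit M) {x y : ν → 𝕜} : M *ᵥ x = y ↔ x = M⁻¹ *ᵥ y := by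
  let := hM.invertible
  constructor
  · exact fun h => (inv_mulVec_eq_vec h.symm).symm
  · rintro rfl
    rw [mulVec_mulVec, mul_inv_of_invertible, one_mulVec]

/-- The coefficients of a hybridized linear system with cells `ι`, volume unknowns indexed by
`δ e` and face unknowns indexed by `μ e` on each cell `e`, and trace unknowns indexed by `τ`. The
assembly matrix `P e`, which sends face residuals of `e` to the global ones, is kept independent of
the restriction `R e`; the HDG method takes `P e = (R e)ᵀ`. -/
structure HybridSystem (𝕜 : Type*) {ι : Type*} (δ μ : ι → Type*) (τ : Type*) where
  A : ∀ e, Matrix (δ e) (δ e) 𝕜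
  C : ∀ e, Matrix (δ e) (μ e) 𝕜
  B : ∀ e, Matrix (μ e) (δ e) 𝕜
  L : ∀ e, Matrix (μ e) (μ e) 𝕜
  R : ∀ e, Matrix (μ e) τ 𝕜
  P : ∀ e, Matrix τ (μ e) 𝕜

namespace HybridSystem

variable {𝕜 ι τ : Type*} {δ μ : ι → Type*} [CommRing 𝕜] [Fintype τ]
  [∀ e, Fintype (δ e)] [∀ e, Fintype (μ e)] [∀ e, DecidableEq (δ e)]

/-- The volume unknowns recovered cell by cell from the trace `Λ`. Meaningful only for
invertible `A e`, since otherwise `(A e)⁻¹ = 0`. -/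
noncomputable def recover (H : HybridSystem 𝕜 δ μ τ) (F : ∀ e, δ e → 𝕜) (Λ : τ → 𝕜) :
    ∀ e, δ e → 𝕜 :=
  fun e => (H.A e)⁻¹ *ᵥ (F e - H.C e *ᵥ (H.R e *ᵥ Λ))

theorem cell_equations_iff_eq_recover (H : HybridSystem 𝕜 δ μ τ) (hA : ∀ e, IsUnit (H.A e))
    (F U : ∀ e, δ e → 𝕜) (Λ : τ → 𝕜) :
    (∀ e, H.A e *ᵥ U e + H.C e *ᵥ (H.R e *ᵥ Λ) = F e) ↔ U = H.recover F Λ := by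
  simp only [← eq_sub_iff_add_eq, mulVec_eq_iff_eq_inv_mulVec (hA _), funext_iff, recover]

variable [Fintype ι]

/-- `U` and `Λ` solve the uncondensed system with volume load `F`: the local equation holds on
every cell, and the assembled transmission condition holds. -/
def IsSolution (H : HybridSystem 𝕜 δ μ τ) (F U : ∀ e, δ e → 𝕜) (Λ : τ → 𝕜) : Prop :=
  (∀ e, H.A e *ᵥ U e + H.C e *ᵥ (H.R e *ᵥ Λ) = F e) ∧
    ∑ e, H.P e *ᵥ (H.B e *ᵥ U e + H.L e *ᵥ (H.R e *ᵥ Λ)) = 0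

/-- The matrix `K` of the statically condensed system, assembled from cellwise Schur
complements. -/
noncomputable def condensedMatrix (H : HybridSystem 𝕜 δ μ τ) : Matrix τ τ 𝕜 :=
  ∑ e, H.P e * (H.L e - H.B e * (H.A e)⁻¹ * H.C e) * H.R e

/-- The right-hand side `S` of the statically condensed system. -/
noncomputable def condensedLoad (H : HybridSystem 𝕜 δ μ τ) (F : ∀ e, δ e → 𝕜) : τ → 𝕜 :=
  -∑ e, H.P e *ᵥ (H.B e *ᵥ ((H.A e)⁻¹ *ᵥ F e))

theorem transmission_recover (H : HybridSystem 𝕜 δ μ τ) (F : ∀ e, δ e → 𝕜) (Λ : τ → 𝕜) :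
    ∑ e, H.P e *ᵥ (H.B e *ᵥ H.recover F Λ e + H.L e *ᵥ (H.R e *ᵥ Λ)) =
      H.condensedMatrix *ᵥ Λ - H.condensedLoad F := by
  rw [condensedMatrix, condensedLoad, sub_neg_eq_add, sum_mulVec, ← Finset.sum_add_distrib]
  refine Finset.sum_congr rfl fun e _ => ?_
  simp only [recover, ← mulVec_mulVec, mulVec_add, mulVec_sub, sub_mulVec]
  abel

theorem isSolution_iff_condensed (H : HybridSystem 𝕜 δ μ τ) (hA : ∀ e, IsUnit (H.A e))
    (F U : ∀ e, δ e → 𝕜) (Λ : τ → 𝕜) :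
    H.IsSolution F U Λ ↔ H.condensedMatrix *ᵥ Λ = H.condensedLoad F ∧ U = H.recover F Λ := by
  rw [IsSolution, H.cell_equations_iff_eq_recover hA, and_comm, and_congr_left_iff]
  rintro rfl
  rw [transmission_recover, sub_eq_zero]

theorem isSolution_iff [DecidableEq τ] (H : HybridSystem 𝕜 δ μ τ) (hA : ∀ e, IsUnit (H.A e))
    (hK : IsUnit H.condensedMatrix) (F U : ∀ e, δ e → 𝕜) (Λ : τ → 𝕜) :
    H.IsSolution F U Λ ↔
      Λ = H.condensedMatrix⁻¹ *ᵥ H.condensedLoad F ∧ U = H.recover F Λ := by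
  rw [H.isSolution_iff_condensed hA, mulVec_eq_iff_eq_inv_mulVec hK]

end HybridSystem

theorem stmt10_general {𝕜 ι τ : Type*} {δ μ : ι → Type*} [CommRing 𝕜] [Fintype ι] [Fintype τ]
    [DecidableEq τ] [∀ e, Fintype (δ e)] [∀ e, Fintype (μ e)] [∀ e, DecidableEq (δ e)]
    (H : HybridSystem 𝕜 δ μ τ) (hA : ∀ e, IsUnit (H.A e)) (hK : IsUnit H.condensedMatrix)
    (F : ∀ e, δ e → 𝕜) :
    (∃! p : (∀ e, δ e → 𝕜) × (τ → 𝕜), H.IsSolution F p.1 p.2) ∧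
      ∀ p : (∀ e, δ e → 𝕜) × (τ → 𝕜), H.IsSolution F p.1 p.2 →
        p.2 = H.condensedMatrix⁻¹ *ᵥ H.condensedLoad F ∧ ∀ e, p.1 e = H.recover F p.2 e := by
  have sol_iff := H.isSolution_iff hA hK F
  let Λ₀ := H.condensedMatrix⁻¹ *ᵥ H.condensedLoad F
  refine ⟨⟨(H.recover F Λ₀, Λ₀), (sol_iff _ Λ₀).2 ⟨rfl, rfl⟩, ?_⟩, fun p hp => ?_⟩
  · rintro ⟨U, Λ⟩ hp
    obtain ⟨hΛ, hU⟩ := (sol_iff U Λ).1 hp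
    rw [hU, hΛ]
  · obtain ⟨hΛ, hU⟩ := (sol_iff p.1 p.2).1 hp
    exact ⟨hΛ, congrFun hU⟩

theorem stmt10 (n N : ℕ) (d m : Fin n → ℕ)
    (A : ∀ e : Fin n, Matrix (Fin (d e)) (Fin (d e)) ℂ)
    (hA : ∀ e, IsUnit (A e))
    (C : ∀ e : Fin n, Matrix (Fin (d e)) (Fin (m e)) ℂ)
    (B : ∀ e : Fin n, Matrix (Fin (m e)) (Fin (d e)) ℂ)
    (L : ∀ e : Fin n, Matrix (Fin (m e)) (Fin (m e)) ℂ)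
    (R : ∀ e : Fin n, Matrix (Fin (m e)) (Fin N) ℂ)
    (K : Matrix (Fin N) (Fin N) ℂ)
    (hK : K = ∑ e, (R e)ᵀ * (L e - B e * (A e)⁻¹ * C e) * R e)
    (hKunit : IsUnit K) :
    ∀ F : ∀ e : Fin n, Fin (d e) → ℂ, ∀ S : Fin N → ℂ,
      S = -∑ e, (R e)ᵀ *ᵥ (B e *ᵥ ((A e)⁻¹ *ᵥ F e)) →
      (∃! p : (∀ e : Fin n, Fin (d e) → ℂ) × (Fin N → ℂ),
        (∀ e, A e *ᵥ p.1 e + C e *ᵥ (R e *ᵥ p.2) = F e) ∧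
        ∑ e, (R e)ᵀ *ᵥ (B e *ᵥ p.1 e + L e *ᵥ (R e *ᵥ p.2)) = 0) ∧
      (∀ p : (∀ e : Fin n, Fin (d e) → ℂ) × (Fin N → ℂ),
        ((∀ e, A e *ᵥ p.1 e + C e *ᵥ (R e *ᵥ p.2) = F e) ∧
          ∑ e, (R e)ᵀ *ᵥ (B e *ᵥ p.1 e + L e *ᵥ (R e *ᵥ p.2)) = 0) →
        p.2 = K⁻¹ *ᵥ S ∧ ∀ e, p.1 e = (A e)⁻¹ *ᵥ (F e - C e *ᵥ (R e *ᵥ p.2))) := by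
  subst hK
  rintro F _ rfl
  exact stmt10_general ⟨A, C, B, L, R, fun e => (R e)ᵀ⟩ hA hKunit F
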